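/- Let G be the group presented by the generating set S and relation set R of Theorem 2.14 (the presentation of the virtual Thompson group VF) as described in the context. Let F be Thompson's group F, given by the infinite presentation with generators x₀, x₁, x₂, … and relations x_k⁻¹ x_n x_k = x_{n+1} for all integers 0 ≤ k < n. Then the assignment x_k ↦ X_{x, x→xx, x^k} (the generator of family (ii) with prefix letter x, rewriting rule x → xx, and suffix word x^k) extends to an injective group homomorphism F → G. In particular, Thompson's group F is (isomorphic to) a subgroup of the virtual Thompson group VF. -/

import Mathlib

/-- The alphabet Σ = {x, v}. -/
inductive Letter : Type
  | x | v
deriving DecidableEq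

/-- Words on Σ (possibly empty). -/
abbrev Word := List Letter

/-- A target word t ∈ {xx, xv, vx, vv}, encoded as the pair of its two letters. -/
abbrev Tgt := Letter × Letter

/-- The word (of length two) corresponding to a target. -/
def tw (t : Tgt) : Word := [t.1, t.2]

/-- Index for the three generators of family (i): X_{v→vv}, X_{v→vx}, X_{v→xv}. -/
inductive G1 : Type
  | vv   -- X_{v→vv}
  | vx   -- X_{v→vx}
  | xv   -- X_{v→xv}
deriving DecidableEq

/-- Index for the four kinds of generators of family (iii):
X_{x→vv,u}, X_{x→vx,u}, X_{v→xx,u}, X_{v→xv,u}. -/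
inductive G3 : Type
  | xvv  -- X_{x→vv,u}
  | xvx  -- X_{x→vx,u}
  | vxx  -- X_{v→xx,u}
  | vxv  -- X_{v→xv,u}
deriving DecidableEq

/-- The generating set S of the presentation of the virtual Thompson group VF. -/
inductive Gen : Type
  /-- family (i): X_{v→vv}, X_{v→vx}, X_{v→xv} -/
  | fam1 : G1 → Gen
  /-- family (ii): X_{a, s→t, u} with a ∈ {x,v}, s ∈ {x,v}, t ∈ {xx,xv,vx,vv}, u any word -/
  | fam2 : Letter → Letter → Tgt → Word → Gen
  /-- family (iii): X_{c, u} with c one of x→vv, x→vx, v→xx, v→xv and u a nonempty word -/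
  | fam3 : G3 → {u : Word // u ≠ []} → Gen

/-- The corresponding generator of the free group on S. -/
def X (g : Gen) : FreeGroup Gen := FreeGroup.of g

open Letter in
/-- The relators of the presentation of VF (each relation A·B = C·D becomes the
relator A·B·(C·D)⁻¹). -/
inductive VFRel : FreeGroup Gen → Prop
  /-- (R1) and (R2): for a ∈ {x, v},
  X_{a,s₁→t₁, p s₂ q} X_{a,s₂→t₂, q} = X_{a,s₂→t₂, q} X_{a,s₁→t₁, p t₂ q}. -/
  | r12 (a s₁ s₂ : Letter) (t₁ t₂ : Tgt) (p q : Word) :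
      VFRel (X (.fam2 a s₁ t₁ (p ++ [s₂] ++ q)) * X (.fam2 a s₂ t₂ q) *
        (X (.fam2 a s₂ t₂ q) * X (.fam2 a s₁ t₁ (p ++ tw t₂ ++ q)))⁻¹)
  /-- (R3): X_{x,s→t,q} X_{x→vv, p t q} = X_{x→vv, p s q} X_{v,s→t,q}. -/
  | r3 (s : Letter) (t : Tgt) (p q : Word) :
      VFRel (X (.fam2 x s t q) * X (.fam3 .xvv ⟨p ++ tw t ++ q, by simp [tw]⟩) *
        (X (.fam3 .xvv ⟨p ++ [s] ++ q, by simp⟩) * X (.fam2 v s t q))⁻¹)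
  /-- (R4): X_{x,s→t,q} X_{x→vx, p t q} = X_{x→vx, p s q} X_{v,s→t,q}. -/
  | r4 (s : Letter) (t : Tgt) (p q : Word) :
      VFRel (X (.fam2 x s t q) * X (.fam3 .xvx ⟨p ++ tw t ++ q, by simp [tw]⟩) *
        (X (.fam3 .xvx ⟨p ++ [s] ++ q, by simp⟩) * X (.fam2 v s t q))⁻¹)
  /-- (R5): X_{v,s→t,q} X_{v→xx, p t q} = X_{v→xx, p s q} X_{x,s→t,q}. -/
  | r5 (s : Letter) (t : Tgt) (p q : Word) :
      VFRel (X (.fam2 v s t q) * X (.fam3 .vxx ⟨p ++ tw t ++ q, by simp [tw]⟩) *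
        (X (.fam3 .vxx ⟨p ++ [s] ++ q, by simp⟩) * X (.fam2 x s t q))⁻¹)
  /-- (R6): X_{v,s→t,q} X_{v→xv, p t q} = X_{v→xv, p s q} X_{x,s→t,q}. -/
  | r6 (s : Letter) (t : Tgt) (p q : Word) :
      VFRel (X (.fam2 v s t q) * X (.fam3 .vxv ⟨p ++ tw t ++ q, by simp [tw]⟩) *
        (X (.fam3 .vxv ⟨p ++ [s] ++ q, by simp⟩) * X (.fam2 x s t q))⁻¹)

/-- The set of relators. -/
def VFrels : Set (FreeGroup Gen) := {g | VFRel g}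

/-- The virtual Thompson group VF, as the presented group ⟨S | R⟩. -/
abbrev VF := PresentedGroup VFrels

/-- The relators of the standard infinite presentation of Thompson's group F:
generators x₀, x₁, x₂, … (indexed by ℕ) and relations x_k⁻¹ x_n x_k = x_{n+1}
for 0 ≤ k < n. -/
def Frels : Set (FreeGroup ℕ) :=
  {r | ∃ n k : ℕ, k < n ∧
    r = (FreeGroup.of k)⁻¹ * FreeGroup.of n * FreeGroup.of k * (FreeGroup.of (n + 1))⁻¹}

/-- Thompson's group F with its standard infinite presentation. -/
abbrev ThompsonF := PresentedGroup Frels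

/-!
In (R1) and (R2) the word `p ++ [s] ++ q` is longer than `q`, and rewriting `s` to a two-letter word
increases its length by one: on lengths of suffix words these are the relations of `F`. In
(R3)-(R6) the two generators of family (ii) have the same suffix word. Hence
`X_{a, s→t, u} ↦ x_{|u|}`, with all other generators sent to `1`, defines a homomorphism `VF → F`.
It is left inverse to `x_k ↦ X_{a, s→ss, s^k}`, which respects the relations of `F` by (R1) and (R2)
applied to powers of the single letter `s`.
-/

namespace ThompsonF

theorem of_mul_of {k n : ℕ} (h : k < n) :
    PresentedGroup.of (rels := Frels) n * PresentedGroup.of k =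
      PresentedGroup.of k * PresentedGroup.of (n + 1) := by
  have relator : (PresentedGroup.of (rels := Frels) k)⁻¹ * PresentedGroup.of n *
      PresentedGroup.of k * (PresentedGroup.of (n + 1))⁻¹ = 1 :=
    PresentedGroup.one_of_mem ⟨n, k, h, rfl⟩
  rwa [mul_inv_eq_one, mul_assoc, inv_mul_eq_iff_eq_mul] at relator

section lift

variable {H : Type*} [Group H] {f : ℕ → H}

theorem freeGroup_lift_eq_one (hf : ∀ k n, k < n → f n * f k = f k * f (n + 1)) :
    ∀ r ∈ Frels, FreeGroup.lift f r = 1 := by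
  rintro _ ⟨n, k, h, rfl⟩
  simp only [map_mul, map_inv, FreeGroup.lift_apply_of]
  rw [mul_inv_eq_one, mul_assoc, hf k n h, inv_mul_cancel_left]

/-- The universal property of `F`: a sequence in a group satisfying the relations of `F`, in the
inverse-free form `f n * f k = f k * f (n + 1)`, extends to a homomorphism. -/
def lift (hf : ∀ k n, k < n → f n * f k = f k * f (n + 1)) : ThompsonF →* H :=
  PresentedGroup.toGroup (freeGroup_lift_eq_one hf)

@[simp]
theorem lift_of (hf : ∀ k n, k < n → f n * f k = f k * f (n + 1)) (k : ℕ) :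
    lift hf (PresentedGroup.of k) = f k :=
  PresentedGroup.toGroup.of (freeGroup_lift_eq_one hf)

end lift

end ThompsonF

namespace VF

theorem of_fam2_mul_of_fam2 (a s₁ s₂ : Letter) (t₁ t₂ : Tgt) (p q : Word) :
    PresentedGroup.of (rels := VFrels) (.fam2 a s₁ t₁ (p ++ [s₂] ++ q)) *
        PresentedGroup.of (.fam2 a s₂ t₂ q) =
      PresentedGroup.of (.fam2 a s₂ t₂ q) *
        PresentedGroup.of (.fam2 a s₁ t₁ (p ++ tw t₂ ++ q)) :=
  mul_inv_eq_one.mp (PresentedGroup.one_of_mem (VFRel.r12 a s₁ s₂ t₁ t₂ p q))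

/-- The image `X_{a, s→ss, s^k}` of the generator `x_k` of `F`; the paper takes `a = s = x`. -/
def powerGen (a s : Letter) (k : ℕ) : VF :=
  PresentedGroup.of (.fam2 a s (s, s) (List.replicate k s))

theorem powerGen_mul_powerGen (a s : Letter) (k n : ℕ) (h : k < n) :
    powerGen a s n * powerGen a s k = powerGen a s k * powerGen a s (n + 1) := by
  obtain ⟨d, rfl⟩ := Nat.exists_eq_add_of_lt h
  have source : List.replicate d s ++ [s] ++ List.replicate k s =
      List.replicate (k + d + 1) s := by
    rw [← List.replicate_one, List.replicate_append_replicate, List.replicate_append_replicate]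
    congr 1
    omega
  have target : List.replicate d s ++ tw (s, s) ++ List.replicate k s =
      List.replicate (k + d + 1 + 1) s := by
    rw [show tw (s, s) = List.replicate 2 s from rfl, List.replicate_append_replicate,
      List.replicate_append_replicate]
    congr 1
    omega
  have relation := of_fam2_mul_of_fam2 a s s (s, s) (s, s) (List.replicate d s)
    (List.replicate k s)
  rwa [source, target] at relation

/-- The homomorphism `F → VF` given by `x_k ↦ X_{a, s→ss, s^k}`. -/
def ofThompsonF (a s : Letter) : ThompsonF →* VF :=
  ThompsonF.lift (powerGen_mul_powerGen a s)

/-- The homomorphism `VF → F` on generators: `X_{a, s→t, u}` maps to `x_{|u|}`, and the generators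
of families (i) and (iii) map to `1`. -/
def suffixLengthGen : Gen → ThompsonF
  | .fam1 _ => 1
  | .fam2 _ _ _ u => PresentedGroup.of u.length
  | .fam3 _ _ => 1

theorem freeGroup_lift_suffixLengthGen_eq_one :
    ∀ r ∈ VFrels, FreeGroup.lift suffixLengthGen r = 1 := by
  intro r hr
  cases hr with
  | r12 a s₁ s₂ t₁ t₂ p q =>
    have length_lt : q.length < (p ++ [s₂] ++ q).length := by
      simp only [List.length_append, List.length_singleton]
      omega
    have length_rewrite : (p ++ tw t₂ ++ q).length = (p ++ [s₂] ++ q).length + 1 := by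
      simp only [tw, List.length_append, List.length_cons, List.length_nil]
      omega
    simp only [X, map_mul, map_inv, FreeGroup.lift_apply_of, suffixLengthGen, mul_inv_eq_one]
    rw [length_rewrite, ThompsonF.of_mul_of length_lt]
  | r3 | r4 | r5 | r6 => simp [X, suffixLengthGen]

/-- The retraction `VF → F` recording the lengths of the suffix words in family (ii). -/
def toThompsonF : VF →* ThompsonF :=
  PresentedGroup.toGroup freeGroup_lift_suffixLengthGen_eq_one

@[simp]
theorem toThompsonF_of (g : Gen) : toThompsonF (PresentedGroup.of g) = suffixLengthGen g :=
  PresentedGroup.toGroup.of freeGroup_lift_suffixLengthGen_eq_one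

theorem toThompsonF_comp_ofThompsonF (a s : Letter) :
    toThompsonF.comp (ofThompsonF a s) = MonoidHom.id ThompsonF := by
  ext k
  simp [ofThompsonF, powerGen, suffixLengthGen]

end VF

theorem thompsonF_embeds_in_VF_general (a s : Letter) :
    ∃ (φ : ThompsonF →* VF) (ψ : VF →* ThompsonF), Function.LeftInverse ψ φ ∧
      ∀ k : ℕ, φ (PresentedGroup.of k) =
        PresentedGroup.of (.fam2 a s (s, s) (List.replicate k s)) :=
  ⟨VF.ofThompsonF a s, VF.toThompsonF, DFunLike.congr_fun (VF.toThompsonF_comp_ofThompsonF a s),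
    ThompsonF.lift_of _⟩

/-- The assignment x_k ↦ X_{x, x→xx, x^k} extends to an injective group homomorphism
F → VF; in particular Thompson's group F is a subgroup of VF. -/
theorem thompsonF_embeds_in_VF :
    ∃ φ : ThompsonF →* VF, Function.Injective φ ∧
      ∀ k : ℕ, φ (PresentedGroup.of (rels := Frels) k) =
        PresentedGroup.of (rels := VFrels)
          (Gen.fam2 Letter.x Letter.x (Letter.x, Letter.x) (List.replicate k Letter.x)) := by
  obtain ⟨φ, _, left_inverse, map_of⟩ := thompsonF_embeds_in_VF_general .x .x
  exact ⟨φ, left_inverse.injective, map_of⟩
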